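/- The subgroup of GL(3,ℂ) generated by σ and ρ equals the subgroup S(2,1) generated by α′, β′, γ′; in particular ⟨σ, ρ⟩ is isomorphic to SL(2,5). -/

import Mathlib

noncomputable section
open Matrix

def zeta5 : ℂ := Complex.exp (2 * Real.pi * Complex.I / 5)

def sqrt5 : ℂ := zeta5 - zeta5 ^ 2 - zeta5 ^ 3 + zeta5 ^ 4

def alpha : Matrix (Fin 2) (Fin 2) ℂ := -(Matrix.of ![![zeta5 ^ 3, 0], ![0, zeta5 ^ 2]])
def beta : Matrix (Fin 2) (Fin 2) ℂ := Matrix.of ![![0, 1], ![-1, 0]]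
def gamma : Matrix (Fin 2) (Fin 2) ℂ :=
  (zeta5 ^ 2 - zeta5 ^ 3)⁻¹ •
    Matrix.of ![![zeta5 + zeta5⁻¹, 1], ![1, -(zeta5 + zeta5⁻¹)]]

/-- The block-diagonal embedding of a `2 × 2` matrix into `GL(3)`, with last diagonal entry 1. -/
def emb (A : Matrix (Fin 2) (Fin 2) ℂ) : Matrix (Fin 3) (Fin 3) ℂ :=
  Matrix.of ![![A 0 0, A 0 1, 0], ![A 1 0, A 1 1, 0], ![0, 0, 1]]

def alpha' : Matrix (Fin 3) (Fin 3) ℂ := emb alpha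
def beta' : Matrix (Fin 3) (Fin 3) ℂ := emb beta
def gamma' : Matrix (Fin 3) (Fin 3) ℂ := emb gamma

def sigma : Matrix (Fin 3) (Fin 3) ℂ :=
  Matrix.of ![![(zeta5 - zeta5 ^ 4) / sqrt5, (zeta5 ^ 3 - zeta5 ^ 2) / sqrt5, 0],
    ![(zeta5 ^ 3 - zeta5 ^ 2) / sqrt5, -((zeta5 - zeta5 ^ 4) / sqrt5), 0],
    ![0, 0, 1]]

def tau : Matrix (Fin 3) (Fin 3) ℂ := Matrix.diagonal ![zeta5, 1, 1]

def rho : Matrix (Fin 3) (Fin 3) ℂ := Matrix.diagonal ![zeta5 ^ 3, zeta5 ^ 2, 1]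

/-- The subgroup of `GL(3, ℂ)` generated by the invertible matrices in `S`. -/
def gen3 (S : Set (Matrix (Fin 3) (Fin 3) ℂ)) : Subgroup (GL (Fin 3) ℂ) :=
  Subgroup.closure {g : GL (Fin 3) ℂ | (g : Matrix (Fin 3) (Fin 3) ℂ) ∈ S}

/-- `S(2,1) = ⟨α', β', γ'⟩`. -/
def S21 : Subgroup (GL (Fin 3) ℂ) := gen3 {alpha', beta', gamma'}

abbrev SL25 := Matrix.SpecialLinearGroup (Fin 2) (ZMod 5)

/-!
Steinberg's relations present `SL(2, F)` for every field `F`: they allow every word in the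
generators to be brought to Bruhat normal form. The upper left blocks of `σ` and `ρ`, together with
`β`, satisfy them over `ZMod 5`, in the roles of `!![0, -1; 1, 0]`, `!![1, 1; 0, 1]` and
`!![2, 0; 0, 3]`, whence a homomorphism from `SL(2, ZMod 5)` onto `⟨σ, ρ⟩`. A proper normal subgroup
of `SL(2, ZMod 5)` lies in `{1, -1}`, and `-1` maps to `β ^ 2 = -1 ≠ 1`, so this is an isomorphism.
Moreover `β` lies in `⟨σ, ρ⟩`, because `2` is in the image of the torus; as `α = β ^ 2 ρ` and
`γ = β ^ 2 σ β`, the two groups agree.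
-/

theorem closure_pair_eq_of_mem {G : Type*} [Group G] {s r b : G}
    (hb : b ∈ Subgroup.closure {s, r}) :
    Subgroup.closure {s, r} = Subgroup.closure {b ^ 2 * r, b, b ^ 2 * s * b} := by
  apply le_antisymm
  · have hb' : b ∈ Subgroup.closure {b ^ 2 * r, b, b ^ 2 * s * b} :=
      Subgroup.subset_closure (by simp)
    have hr : b ^ 2 * r ∈ Subgroup.closure {b ^ 2 * r, b, b ^ 2 * s * b} :=
      Subgroup.subset_closure (by simp)
    have hs : b ^ 2 * s * b ∈ Subgroup.closure {b ^ 2 * r, b, b ^ 2 * s * b} :=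
      Subgroup.subset_closure (by simp)
    rw [Subgroup.mul_mem_cancel_left _ (pow_mem hb' 2)] at hr
    rw [Subgroup.mul_mem_cancel_right _ hb', Subgroup.mul_mem_cancel_left _ (pow_mem hb' 2)] at hs
    rw [Subgroup.closure_le, Set.pair_subset_iff]
    exact ⟨hs, hr⟩
  · have hs : s ∈ Subgroup.closure {s, r} := Subgroup.subset_closure (by simp)
    have hr : r ∈ Subgroup.closure {s, r} := Subgroup.subset_closure (by simp)
    rw [Subgroup.closure_le, Set.insert_subset_iff, Set.pair_subset_iff]
    exact ⟨mul_mem (pow_mem hb 2) hr, hb, mul_mem (mul_mem (pow_mem hb 2) hs) hb⟩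

section QuasiSimple

open scoped MatrixGroups

theorem le_center_or_eq_top_of_isPerfect {G : Type*} [Group G] [Group.IsPerfect G]
    [IsSimpleGroup (G ⧸ Subgroup.center G)] (N : Subgroup G) [hN : N.Normal] :
    N ≤ Subgroup.center G ∨ N = ⊤ := by
  have hmap : (N.map (QuotientGroup.mk' (Subgroup.center G))).Normal :=
    hN.map _ (QuotientGroup.mk'_surjective _)
  rcases hmap.eq_bot_or_eq_top with hbot | htop
  · left
    rwa [Subgroup.map_eq_bot_iff, QuotientGroup.ker_mk'] at hbot
  · right
    have hsup : N ⊔ Subgroup.center G = ⊤ := by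
      rw [← QuotientGroup.ker_mk' (Subgroup.center G), ← Subgroup.comap_map_eq, htop,
        Subgroup.comap_top]
    rw [eq_top_iff, ← Group.IsPerfect.commutator_eq_top]
    exact hN.commutator_le_of_self_sup_commutative_eq_top hsup inferInstance

theorem eq_one_or_eq_neg_one_of_mem_center {R : Type*} [CommRing R] [IsDomain R] {g : SL(2, R)}
    (hg : g ∈ Subgroup.center SL(2, R)) : g = 1 ∨ g = -1 := by
  obtain ⟨r, hr, hrg⟩ := Matrix.SpecialLinearGroup.mem_center_iff.1 hg
  rw [Fintype.card_fin, sq_eq_one_iff] at hr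
  refine hr.imp ?_ ?_ <;> rintro rfl <;> apply Subtype.ext <;> simp [← hrg, ← smul_one_eq_diagonal]

theorem injective_of_map_neg_one_ne_one {F M : Type*} [Field F] [Group M]
    (hF : ∃ a : F, a ≠ 0 ∧ a ^ 2 ≠ 1) (f : SL(2, F) →* M) (hf : f (-1) ≠ 1) :
    Function.Injective f := by
  have : Group.IsPerfect SL(2, F) := by
    obtain ⟨a, ha, ha2⟩ := hF
    exact ⟨SL2.commutator_eq_top ha ha2⟩
  have : IsSimpleGroup (SL(2, F) ⧸ Subgroup.center SL(2, F)) :=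
    ProjectiveSpecialLinearGroup.rank_two_simple' hF
  have hcenter : f.ker ≤ Subgroup.center SL(2, F) :=
    (le_center_or_eq_top_of_isPerfect f.ker).resolve_right fun htop ↦
      hf (f.mem_ker.1 (htop ▸ Subgroup.mem_top _))
  refine (injective_iff_map_eq_one f).2 fun g hg ↦ ?_
  refine (eq_one_or_eq_neg_one_of_mem_center (hcenter hg)).resolve_right ?_
  rintro rfl
  exact hf hg

end QuasiSimple

section Steinberg

open scoped MatrixGroups

/-- Steinberg's relations for `SL(2, F)` in a group `M`: `u t`, `h a` and `w` play the roles of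
`!![1, t; 0, 1]`, `!![a, 0; 0, a⁻¹]` and `!![0, -1; 1, 0]`. -/
structure SteinbergSystem (F M : Type*) [Field F] [Group M] where
  u : F → M
  h : Fˣ →* M
  w : M
  u_add (s t : F) : u (s + t) = u s * u t
  h_mul_u (a : Fˣ) (t : F) : h a * u t = u (a ^ 2 * t) * h a
  w_mul_h (a : Fˣ) : w * h a = h a⁻¹ * w
  w_mul_w : w * w = h (-1)
  w_mul_u_mul_w (t : Fˣ) : w * u t * w = u (-↑t⁻¹) * w * h t * u (-↑t⁻¹)

/-- Normal forms for the Bruhat decomposition `SL(2, F) = B ⊔ U w B`: `borel t a` stands for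
`u t * h a` and `bigCell x c y` for `u x * w * h c * u y`. -/
inductive BruhatForm (F : Type*) [Field F]
  | borel (t : F) (a : Fˣ)
  | bigCell (x : F) (c : Fˣ) (y : F)

namespace BruhatForm

variable {F : Type*} [Field F]

/-- The normal form of `u s` times a normal form. -/
def uMul (s : F) : BruhatForm F → BruhatForm F
  | borel t a => borel (s + t) a
  | bigCell x c y => bigCell (s + x) c y

/-- The normal form of `h b` times a normal form. -/
def hMul (b : Fˣ) : BruhatForm F → BruhatForm F
  | borel t a => borel (b ^ 2 * t) (b * a)
  | bigCell x c y => bigCell (b ^ 2 * x) (b⁻¹ * c) y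

open scoped Classical in
/-- The normal form of `w` times a normal form. -/
def wMul : BruhatForm F → BruhatForm F
  | borel t a => bigCell 0 a ((a⁻¹ : Fˣ) ^ 2 * t)
  | bigCell x c y =>
    if hx : x = 0 then borel (c ^ 2 * y) (-c)
    else bigCell (-x⁻¹) (Units.mk0 x hx * c) ((c⁻¹ : Fˣ) ^ 2 * -x⁻¹ + y)

end BruhatForm

namespace SteinbergSystem

variable {F M : Type*} [Field F] [Group M] (D : SteinbergSystem F M)

theorem u_zero : D.u 0 = 1 := by
  simpa using D.u_add 0 0

theorem u_mul_h (a : Fˣ) (t : F) : D.u t * D.h a = D.h a * D.u ((a⁻¹ : Fˣ) ^ 2 * t) := by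
  rw [D.h_mul_u, ← mul_assoc, ← mul_pow, Units.mul_inv, one_pow, one_mul]

/-- The element of `M` spelled by a normal form. -/
def eval : BruhatForm F → M
  | .borel t a => D.u t * D.h a
  | .bigCell x c y => D.u x * D.w * D.h c * D.u y

theorem eval_uMul (s : F) (n : BruhatForm F) : D.eval (n.uMul s) = D.u s * D.eval n := by
  cases n <;> simp only [BruhatForm.uMul, eval, D.u_add, mul_assoc]

theorem eval_hMul (b : Fˣ) (n : BruhatForm F) : D.eval (n.hMul b) = D.h b * D.eval n := by
  cases n with
  | borel t a => simp only [BruhatForm.hMul, eval, map_mul, ← mul_assoc, D.h_mul_u]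
  | bigCell x c y =>
    have hw : D.h b * D.w = D.w * D.h b⁻¹ := by rw [D.w_mul_h, inv_inv]
    calc D.u (b ^ 2 * x) * D.w * D.h (b⁻¹ * c) * D.u y
        = D.u (b ^ 2 * x) * (D.w * D.h b⁻¹) * D.h c * D.u y := by simp only [map_mul, mul_assoc]
      _ = D.u (b ^ 2 * x) * D.h b * D.w * D.h c * D.u y := by simp only [← hw, mul_assoc]
      _ = D.h b * (D.u x * D.w * D.h c * D.u y) := by simp only [← D.h_mul_u, mul_assoc]

theorem eval_wMul (n : BruhatForm F) : D.eval n.wMul = D.w * D.eval n := by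
  cases n with
  | borel t a =>
    rw [BruhatForm.wMul, eval, eval, D.u_zero, one_mul, D.u_mul_h, mul_assoc]
  | bigCell x c y =>
    by_cases hx : x = 0
    · subst hx
      calc D.eval (.wMul (.bigCell 0 c y))
          = D.u (c ^ 2 * y) * D.h (-c) := by simp [BruhatForm.wMul, eval]
        _ = D.h (-1) * (D.h c * D.u y) := by
          rw [← mul_assoc, ← map_mul, neg_one_mul, D.h_mul_u, Units.val_neg, neg_sq]
        _ = D.w * D.eval (.bigCell 0 c y) := by
          rw [eval, D.u_zero, one_mul, ← D.w_mul_w]; simp only [mul_assoc]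
    · have hw := D.w_mul_u_mul_w (Units.mk0 x hx)
      rw [Units.val_inv_eq_inv_val, Units.val_mk0] at hw
      simp only [BruhatForm.wMul, dif_neg hx, eval, map_mul, D.u_add]
      calc _ = D.u (-x⁻¹) * D.w * D.h (Units.mk0 x hx) *
              (D.h c * D.u ((c⁻¹ : Fˣ) ^ 2 * -x⁻¹)) * D.u y := by simp only [mul_assoc]
        _ = (D.w * D.u x * D.w) * D.h c * D.u y := by rw [← D.u_mul_h, hw]; simp only [mul_assoc]
        _ = _ := by simp only [mul_assoc]

end SteinbergSystem

section Standard

variable {F : Type*} [Field F]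

/-- The root subgroup element `!![1, t; 0, 1]`. -/
def upperUnipotent (t : F) : SL(2, F) := ⟨!![1, t; 0, 1], by simp⟩

/-- The diagonal torus `a ↦ !![a, 0; 0, a⁻¹]`. -/
def diagonalTorus (F : Type*) [Field F] : Fˣ →* SL(2, F) where
  toFun a := SpecialLinearGroup.diag2 (a : F) a.ne_zero
  map_one' := Subtype.ext (by simp [SpecialLinearGroup.diag2_coe', one_fin_two])
  map_mul' a b := Subtype.ext (by simp [SpecialLinearGroup.diag2_coe', mul_comm])

/-- The representative `!![0, -1; 1, 0]` of the nontrivial Weyl group element. -/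
def weylElement (F : Type*) [Field F] : SL(2, F) := ⟨!![0, -1; 1, 0], by simp⟩

theorem coe_upperUnipotent (t : F) :
    (upperUnipotent t : Matrix (Fin 2) (Fin 2) F) = !![1, t; 0, 1] := rfl

theorem coe_diagonalTorus (a : Fˣ) :
    (diagonalTorus F a : Matrix (Fin 2) (Fin 2) F) = !![↑a, 0; 0, (↑a)⁻¹] :=
  SpecialLinearGroup.diag2_coe' a.ne_zero

theorem coe_weylElement : (weylElement F : Matrix (Fin 2) (Fin 2) F) = !![0, -1; 1, 0] := rfl

end Standard

namespace SteinbergSystem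

variable {F M : Type*} [Field F] [Group M] (D : SteinbergSystem F M)

/-- The generators of `SL(2, F)` itself satisfying Steinberg's relations. -/
def standard (F : Type*) [Field F] : SteinbergSystem F SL(2, F) where
  u := upperUnipotent
  h := diagonalTorus F
  w := weylElement F
  u_add s t := Subtype.ext (by simp [coe_upperUnipotent, add_comm])
  h_mul_u a t := Subtype.ext (by
    simp [coe_upperUnipotent, coe_diagonalTorus, pow_two, mul_right_comm])
  w_mul_h a := Subtype.ext (by simp [coe_weylElement, coe_diagonalTorus])
  w_mul_w := Subtype.ext (by simp [coe_weylElement, coe_diagonalTorus])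
  w_mul_u_mul_w t := Subtype.ext (by
    simp [coe_upperUnipotent, coe_diagonalTorus, coe_weylElement])

theorem coe_standard_eval_borel (t : F) (a : Fˣ) :
    ((standard F).eval (.borel t a) : Matrix (Fin 2) (Fin 2) F) =
      !![↑a, t * (↑a)⁻¹; 0, (↑a)⁻¹] := by
  simp [eval, standard, coe_upperUnipotent, coe_diagonalTorus]

theorem coe_standard_eval_bigCell (x : F) (c : Fˣ) (y : F) :
    ((standard F).eval (.bigCell x c y) : Matrix (Fin 2) (Fin 2) F) =
      !![x * c, x * c * y - (↑c)⁻¹; ↑c, c * y] := by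
  simp [eval, standard, coe_upperUnipotent, coe_diagonalTorus, coe_weylElement, sub_eq_add_neg]

theorem standard_eval_injective : Function.Injective (standard F).eval := by
  intro m n hmn
  replace hmn := congrArg Subtype.val hmn
  cases m <;> cases n <;>
    simp only [coe_standard_eval_borel, coe_standard_eval_bigCell, EmbeddingLike.apply_eq_iff_eq,
      vecCons_inj, and_true] at hmn
  case borel.borel t a s b =>
    obtain rfl : a = b := Units.ext hmn.1.1
    rw [mul_left_inj' (inv_ne_zero a.ne_zero)] at hmn
    rw [hmn.1.2]
  case borel.bigCell c _ => exact absurd hmn.2.1.symm c.ne_zero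
  case bigCell.borel c _ _ _ => exact absurd hmn.2.1 c.ne_zero
  case bigCell.bigCell x c y x' c' y' =>
    obtain rfl : c = c' := Units.ext hmn.2.1
    rw [mul_right_cancel₀ c.ne_zero hmn.1.1, mul_left_cancel₀ c.ne_zero hmn.2.2]

theorem standard_eval_surjective : Function.Surjective (standard F).eval := by
  intro g
  induction g using SpecialLinearGroup.fin_two_induction with | h a b c d hdet =>
  by_cases hc : c = 0
  · subst hc
    rw [mul_zero, sub_zero] at hdet
    have ha : a ≠ 0 := left_ne_zero_of_mul_eq_one hdet
    refine ⟨.borel (b * a) (Units.mk0 a ha), Subtype.ext ?_⟩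
    simp [coe_standard_eval_borel, inv_eq_of_mul_eq_one_right hdet, mul_assoc, hdet]
  · refine ⟨.bigCell (a / c) (Units.mk0 c hc) (d / c), Subtype.ext ?_⟩
    have hb : a * d / c - c⁻¹ = b := by field_simp; linear_combination hdet
    simp [coe_standard_eval_bigCell, hc, mul_div_cancel₀, ← hb, mul_div_assoc]

/-- The Bruhat decomposition of `SL(2, F)`. -/
def bruhatEquiv (F : Type*) [Field F] : BruhatForm F ≃ SL(2, F) :=
  .ofBijective (standard F).eval ⟨standard_eval_injective, standard_eval_surjective⟩

/-- The map `SL(2, F) → M` that reads the Bruhat normal form of a matrix in `M`. -/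
def liftFun (g : SL(2, F)) : M := D.eval ((bruhatEquiv F).symm g)

theorem liftFun_eval (n : BruhatForm F) : D.liftFun ((standard F).eval n) = D.eval n :=
  congrArg D.eval ((bruhatEquiv F).symm_apply_apply n)

theorem liftFun_u_mul (s : F) (g : SL(2, F)) :
    D.liftFun ((standard F).u s * g) = D.u s * D.liftFun g := by
  obtain ⟨n, rfl⟩ := standard_eval_surjective g
  rw [← eval_uMul, liftFun_eval, liftFun_eval, eval_uMul]

theorem liftFun_h_mul (b : Fˣ) (g : SL(2, F)) :
    D.liftFun ((standard F).h b * g) = D.h b * D.liftFun g := by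
  obtain ⟨n, rfl⟩ := standard_eval_surjective g
  rw [← eval_hMul, liftFun_eval, liftFun_eval, eval_hMul]

theorem liftFun_w_mul (g : SL(2, F)) :
    D.liftFun ((standard F).w * g) = D.w * D.liftFun g := by
  obtain ⟨n, rfl⟩ := standard_eval_surjective g
  rw [← eval_wMul, liftFun_eval, liftFun_eval, eval_wMul]

/-- The homomorphism `SL(2, F) →* M` given by Steinberg's presentation of `SL(2, F)`. -/
def lift : SL(2, F) →* M :=
  MonoidHom.mk' D.liftFun fun g g' ↦ by
    obtain ⟨n, rfl⟩ := standard_eval_surjective g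
    rw [liftFun_eval]
    cases n <;> simp only [eval, mul_assoc, liftFun_u_mul, liftFun_h_mul, liftFun_w_mul]

theorem lift_eval (n : BruhatForm F) : D.lift ((standard F).eval n) = D.eval n :=
  D.liftFun_eval n

theorem lift_u (t : F) : D.lift ((standard F).u t) = D.u t := by
  simpa [eval] using D.lift_eval (.borel t 1)

theorem lift_h (a : Fˣ) : D.lift ((standard F).h a) = D.h a := by
  simpa [eval, u_zero] using D.lift_eval (.borel 0 a)

theorem lift_w : D.lift (standard F).w = D.w := by
  simpa [eval, u_zero] using D.lift_eval (.bigCell 0 1 0)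

theorem w_mem_closure : D.w ∈ Subgroup.closure (insert D.w (Set.range D.u)) :=
  Subgroup.subset_closure (Set.mem_insert _ _)

theorem u_mem_closure (t : F) : D.u t ∈ Subgroup.closure (insert D.w (Set.range D.u)) :=
  Subgroup.subset_closure (Set.mem_insert_of_mem _ ⟨t, rfl⟩)

theorem h_mem_closure (a : Fˣ) : D.h a ∈ Subgroup.closure (insert D.w (Set.range D.u)) := by
  have hmem := mul_mem (mul_mem D.w_mem_closure (D.u_mem_closure a)) D.w_mem_closure
  rwa [D.w_mul_u_mul_w, Subgroup.mul_mem_cancel_right _ (D.u_mem_closure _),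
    Subgroup.mul_mem_cancel_left _ (mul_mem (D.u_mem_closure _) D.w_mem_closure)] at hmem

theorem eval_mem_closure (n : BruhatForm F) :
    D.eval n ∈ Subgroup.closure (insert D.w (Set.range D.u)) := by
  cases n with
  | borel t a => exact mul_mem (D.u_mem_closure t) (D.h_mem_closure a)
  | bigCell x c y =>
    exact mul_mem (mul_mem (mul_mem (D.u_mem_closure x) D.w_mem_closure) (D.h_mem_closure c))
      (D.u_mem_closure y)

theorem range_lift : D.lift.range = Subgroup.closure (insert D.w (Set.range D.u)) := by
  apply le_antisymm
  · rintro _ ⟨g, rfl⟩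
    exact D.eval_mem_closure _
  · rw [Subgroup.closure_le, Set.insert_subset_iff, Set.range_subset_iff]
    exact ⟨⟨_, D.lift_w⟩, fun t ↦ ⟨_, D.lift_u t⟩⟩

theorem standard_h_neg_one : (standard F).h (-1) = -1 :=
  Subtype.ext (by simp [standard, coe_diagonalTorus, one_fin_two])

theorem lift_injective (hF : ∃ a : F, a ≠ 0 ∧ a ^ 2 ≠ 1) (hD : D.h (-1) ≠ 1) :
    Function.Injective D.lift :=
  injective_of_map_neg_one_ne_one hF D.lift (by rwa [← standard_h_neg_one, lift_h])

end SteinbergSystem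

end Steinberg

section ZModFive

open scoped MatrixGroups

/-- The relations that `s = !![0, -1; 1, 0]`, `r = !![1, 1; 0, 1]` and `b = !![2, 0; 0, 3]` satisfy
in `SL(2, ZMod 5)`. The last four are `w * u t * w = u (-t⁻¹) * w * h t * u (-t⁻¹)` for
`t = 1, 2, 3, 4`, where `2` generates `(ZMod 5)ˣ` and so `h 3 = b ^ 3` and `h 4 = b ^ 2`. -/
structure SL25Relations {M : Type*} [Group M] (s r b : M) : Prop where
  r_pow_five : r ^ 5 = 1
  b_pow_four : b ^ 4 = 1
  b_mul_r : b * r = r ^ 4 * b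
  b_mul_s_mul_b : b * (s * b) = s
  s_mul_s : s * s = b ^ 2
  s_mul_r_mul_s : s * r * s = r ^ 4 * s * r ^ 4
  s_mul_r_sq_mul_s : s * r ^ 2 * s = r ^ 2 * s * b * r ^ 2
  s_mul_r_cube_mul_s : s * r ^ 3 * s = r ^ 3 * s * b ^ 3 * r ^ 3
  s_mul_r_pow_four_mul_s : s * r ^ 4 * s = r * s * b ^ 2 * r

local instance : Fact (Nat.Prime 5) := ⟨by norm_num⟩

/-- The generator `2` of `(ZMod 5)ˣ`. -/
def twoUnit : (ZMod 5)ˣ := ⟨2, 3, by decide, by decide⟩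

theorem exists_lt_four_twoUnit_pow_eq : ∀ a : (ZMod 5)ˣ, ∃ k < 4, twoUnit ^ k = a := by
  decide

theorem orderOf_twoUnit : orderOf twoUnit = 4 :=
  orderOf_eq_prime_pow (p := 2) (n := 1) (by decide) (by decide)

theorem mem_zpowers_twoUnit (a : (ZMod 5)ˣ) : a ∈ Subgroup.zpowers twoUnit := by
  obtain ⟨k, -, rfl⟩ := exists_lt_four_twoUnit_pow_eq a
  exact Subgroup.npow_mem_zpowers _ k

theorem pow_val_natCast {M : Type*} [Monoid M] {p : ℕ} {r : M} (hr : r ^ p = 1) (n : ℕ) :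
    r ^ (n : ZMod p).val = r ^ n := by
  rw [ZMod.val_natCast, ← pow_eq_pow_mod n hr]

namespace SL25Relations

variable {M : Type*} [Group M] {s r b : M} (R : SL25Relations s r b)

/-- The homomorphism sending `2 ∈ (ZMod 5)ˣ` to `b`. -/
def torusHom : (ZMod 5)ˣ →* M :=
  monoidHomOfForallMemZpowers mem_zpowers_twoUnit
    (orderOf_twoUnit ▸ orderOf_dvd_of_pow_eq_one R.b_pow_four)

theorem torusHom_twoUnit_pow (k : ℕ) : R.torusHom (twoUnit ^ k) = b ^ k := by
  rw [map_pow, torusHom, monoidHomOfForallMemZpowers_apply_gen]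

include R in
theorem b_pow_mul_r_pow (k n : ℕ) : b ^ k * r ^ n = r ^ ((2 ^ k) ^ 2 * n) * b ^ k := by
  induction k with
  | zero => simp
  | succ k ih =>
    have hb : b * r ^ ((2 ^ k) ^ 2 * n) = (r ^ 4) ^ ((2 ^ k) ^ 2 * n) * b :=
      SemiconjBy.pow_right R.b_mul_r _
    rw [pow_succ' b, mul_assoc, ih, ← mul_assoc, hb, ← pow_mul, mul_assoc]
    ring_nf

/-- The Steinberg system over `ZMod 5` with `w = s`, `u 1 = r` and `h 2 = b`. -/
def steinbergSystem : SteinbergSystem (ZMod 5) M where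
  u t := r ^ t.val
  h := R.torusHom
  w := s
  u_add t t' := by rw [ZMod.val_add, ← pow_eq_pow_mod _ R.r_pow_five, pow_add]
  h_mul_u a t := by
    obtain ⟨k, -, rfl⟩ := exists_lt_four_twoUnit_pow_eq a
    have ht : ((twoUnit ^ k : (ZMod 5)ˣ) : ZMod 5) ^ 2 * t = ((2 ^ k) ^ 2 * t.val : ℕ) := by
      simp [twoUnit]
    rw [R.torusHom_twoUnit_pow, R.b_pow_mul_r_pow, ht, pow_val_natCast R.r_pow_five]
  w_mul_h a := by
    obtain ⟨k, -, rfl⟩ := exists_lt_four_twoUnit_pow_eq a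
    rw [map_inv, R.torusHom_twoUnit_pow, ← inv_pow]
    exact SemiconjBy.pow_right (eq_inv_mul_of_mul_eq R.b_mul_s_mul_b) k
  w_mul_w := by
    rw [show (-1 : (ZMod 5)ˣ) = twoUnit ^ 2 by decide, R.torusHom_twoUnit_pow, R.s_mul_s]
  w_mul_u_mul_w t := by
    obtain ⟨k, hk, rfl⟩ := exists_lt_four_twoUnit_pow_eq t
    rw [R.torusHom_twoUnit_pow]
    interval_cases k
    · change s * r ^ 1 * s = r ^ 4 * s * b ^ 0 * r ^ 4
      rw [pow_one, pow_zero, mul_one, R.s_mul_r_mul_s]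
    · change s * r ^ 2 * s = r ^ 2 * s * b ^ 1 * r ^ 2
      rw [pow_one, R.s_mul_r_sq_mul_s]
    · change s * r ^ 4 * s = r ^ 1 * s * b ^ 2 * r ^ 1
      rw [pow_one, R.s_mul_r_pow_four_mul_s]
    · exact R.s_mul_r_cube_mul_s

theorem closure_insert_range_u :
    Subgroup.closure (insert s (Set.range R.steinbergSystem.u)) = Subgroup.closure {s, r} := by
  have hs : s ∈ Subgroup.closure {s, r} := Subgroup.subset_closure (by simp)
  have hr : r ∈ Subgroup.closure {s, r} := Subgroup.subset_closure (by simp)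
  apply le_antisymm
  · rw [Subgroup.closure_le, Set.insert_subset_iff, Set.range_subset_iff]
    exact ⟨hs, fun t ↦ pow_mem hr _⟩
  · exact Subgroup.closure_mono
      (Set.insert_subset_insert (Set.singleton_subset_iff.2 ⟨1, pow_one r⟩))

include R in
theorem b_mem_closure : b ∈ Subgroup.closure {s, r} := by
  have hb : R.torusHom (twoUnit ^ 1) ∈ Subgroup.closure {s, r} :=
    R.closure_insert_range_u ▸ R.steinbergSystem.h_mem_closure _
  rwa [R.torusHom_twoUnit_pow, pow_one] at hb

/-- The inverse of the isomorphism from `SL(2, ZMod 5)` onto `closure {s, r}` given by Steinberg's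
presentation. -/
def closureEquiv (hb : b ^ 2 ≠ 1) :
    Subgroup.closure {s, r} ≃* SL(2, ZMod 5) :=
  have hinj : Function.Injective R.steinbergSystem.lift :=
    R.steinbergSystem.lift_injective ⟨2, by decide, by decide⟩
      (by rwa [← R.steinbergSystem.w_mul_w, steinbergSystem, R.s_mul_s])
  (MulEquiv.subgroupCongr (R.steinbergSystem.range_lift.trans R.closure_insert_range_u)).symm.trans
    (MonoidHom.ofInjective hinj).symm

end SL25Relations

end ZModFive

section Complex

open scoped MatrixGroups

theorem isPrimitiveRoot_zeta5 : IsPrimitiveRoot zeta5 5 := by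
  simpa [zeta5] using Complex.isPrimitiveRoot_exp 5 (by norm_num)

theorem zeta5_pow_five : zeta5 ^ 5 = 1 := isPrimitiveRoot_zeta5.pow_eq_one

theorem sum_zeta5_pow : 1 + zeta5 + zeta5 ^ 2 + zeta5 ^ 3 + zeta5 ^ 4 = 0 := by
  simpa [Finset.sum_range_succ] using isPrimitiveRoot_zeta5.geom_sum_eq_zero (by norm_num)

theorem sqrt5_sq : sqrt5 ^ 2 = 5 := by
  have := sum_zeta5_pow
  grind [sqrt5]

theorem sqrt5_ne_zero : sqrt5 ≠ 0 := by
  rintro h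
  simpa [h] using sqrt5_sq

theorem div_sqrt5 (z : ℂ) :
    z / sqrt5 = z * (zeta5 - zeta5 ^ 2 - zeta5 ^ 3 + zeta5 ^ 4) / 5 := by
  change z / sqrt5 = z * sqrt5 / 5
  rw [← sqrt5_sq, pow_two, mul_div_mul_right _ _ sqrt5_ne_zero]

/-- The upper left `2 × 2` block of `σ`. -/
def sigmaSL : SL(2, ℂ) :=
  ⟨!![(zeta5 - zeta5 ^ 4) / sqrt5, (zeta5 ^ 3 - zeta5 ^ 2) / sqrt5;
      (zeta5 ^ 3 - zeta5 ^ 2) / sqrt5, -((zeta5 - zeta5 ^ 4) / sqrt5)], by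
    have := sum_zeta5_pow
    simp only [det_fin_two_of, div_sqrt5]
    grind⟩

/-- The upper left `2 × 2` block of `ρ`. -/
def rhoSL : SL(2, ℂ) :=
  ⟨!![zeta5 ^ 3, 0; 0, zeta5 ^ 2], by
    rw [det_fin_two_of, mul_zero, sub_zero, ← pow_add, zeta5_pow_five]⟩

/-- The matrix `β` as an element of `SL(2, ℂ)`. -/
def betaSL : SL(2, ℂ) := ⟨!![0, 1; -1, 0], by simp⟩

theorem coe_sigmaSL : (sigmaSL : Matrix (Fin 2) (Fin 2) ℂ) =
    !![(zeta5 + 2 * zeta5 ^ 2 - 2 * zeta5 ^ 3 - zeta5 ^ 4) / 5,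
        (-2 * zeta5 + zeta5 ^ 2 - zeta5 ^ 3 + 2 * zeta5 ^ 4) / 5;
      (-2 * zeta5 + zeta5 ^ 2 - zeta5 ^ 3 + 2 * zeta5 ^ 4) / 5,
        -((zeta5 + 2 * zeta5 ^ 2 - 2 * zeta5 ^ 3 - zeta5 ^ 4) / 5)] := by
  have := sum_zeta5_pow
  simp only [sigmaSL, div_sqrt5]
  congr! 3 <;> grind

theorem coe_rhoSL : (rhoSL : Matrix (Fin 2) (Fin 2) ℂ) = !![zeta5 ^ 3, 0; 0, zeta5 ^ 2] := rfl

theorem coe_betaSL : (betaSL : Matrix (Fin 2) (Fin 2) ℂ) = !![0, 1; -1, 0] := rfl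

theorem betaSL_sq : betaSL ^ 2 = -1 :=
  Subtype.ext (by simp [pow_two, coe_betaSL, one_fin_two])

theorem sl25Relations_sigmaSL_rhoSL_betaSL : SL25Relations sigmaSL rhoSL betaSL := by
  have := sum_zeta5_pow
  constructor <;> apply Subtype.ext <;>
    simp only [Matrix.SpecialLinearGroup.coe_mul, Matrix.SpecialLinearGroup.coe_one,
      coe_sigmaSL, coe_rhoSL, coe_betaSL, mul_fin_two,
      one_fin_two, pow_succ _ 4, pow_succ _ 3, pow_succ _ 2, pow_two] <;>
    congr! 3 <;> grind

theorem betaSL_sq_ne_one : betaSL ^ 2 ≠ 1 := by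
  rw [betaSL_sq, Ne, Matrix.SpecialLinearGroup.ext_iff]
  intro h
  have h00 := h 0 0
  norm_num at h00

theorem alpha_eq : alpha = (betaSL ^ 2 * rhoSL : SL(2, ℂ)) := by
  rw [betaSL_sq, neg_one_mul]
  rfl

theorem inv_zeta5_sq_sub_zeta5_cube :
    (zeta5 ^ 2 - zeta5 ^ 3)⁻¹ = -((zeta5 - zeta5 ^ 4) / sqrt5) := by
  have := sum_zeta5_pow
  apply inv_eq_of_mul_eq_one_right
  rw [div_sqrt5]
  grind

theorem inv_zeta5 : zeta5⁻¹ = zeta5 ^ 4 :=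
  inv_eq_of_mul_eq_one_right (by rw [← pow_succ', zeta5_pow_five])

theorem gamma_eq : gamma = (betaSL ^ 2 * sigmaSL * betaSL : SL(2, ℂ)) := by
  have := sum_zeta5_pow
  rw [betaSL_sq, neg_one_mul, neg_mul, gamma, inv_zeta5_sq_sub_zeta5_cube, inv_zeta5]
  simp only [Matrix.SpecialLinearGroup.coe_neg, Matrix.SpecialLinearGroup.coe_mul, coe_sigmaSL,
    coe_betaSL, mul_fin_two, smul_of, smul_cons, smul_empty, neg_of, neg_cons, neg_empty,
    smul_eq_mul, div_sqrt5]
  congr! 3 <;> grind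

/-- `emb` as a monoid homomorphism. -/
def embHom : Matrix (Fin 2) (Fin 2) ℂ →* Matrix (Fin 3) (Fin 3) ℂ where
  toFun := emb
  map_one' := by ext i j; fin_cases i <;> fin_cases j <;> simp [emb]
  map_mul' A B := by
    ext i j
    fin_cases i <;> fin_cases j <;>
      simp [emb, Matrix.mul_apply, Fin.sum_univ_two, Fin.sum_univ_three]

theorem emb_injective : Function.Injective emb :=
  Function.LeftInverse.injective (g := fun A ↦ A.submatrix Fin.castSucc Fin.castSucc) fun A ↦ by
    ext i j
    fin_cases i <;> fin_cases j <;> rfl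

/-- The block-diagonal embedding of `SL(2, ℂ)` into `GL(3, ℂ)`. -/
def embSL : SL(2, ℂ) →* GL (Fin 3) ℂ :=
  (Units.map embHom).comp Matrix.SpecialLinearGroup.toGL

theorem coe_embSL (A : SL(2, ℂ)) : (embSL A : Matrix (Fin 3) (Fin 3) ℂ) = emb A := rfl

theorem embSL_injective : Function.Injective embSL := fun _ _ h ↦
  Subtype.ext (emb_injective (congrArg Units.val h))

theorem gen3_image_emb (S : Set SL(2, ℂ)) :
    gen3 ((fun A : SL(2, ℂ) ↦ emb A) '' S) = (Subgroup.closure S).map embSL := by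
  rw [MonoidHom.map_closure, gen3]
  congr 1
  ext g
  simp [Units.ext_iff, coe_embSL]

theorem sigma_eq : sigma = emb sigmaSL := rfl

theorem rho_eq : rho = emb rhoSL := by
  ext i j
  fin_cases i <;> fin_cases j <;> simp [rho, emb, coe_rhoSL]

theorem gen3_sigma_rho :
    gen3 {sigma, rho} = (Subgroup.closure {sigmaSL, rhoSL}).map embSL := by
  rw [← gen3_image_emb, Set.image_pair, sigma_eq, rho_eq]

theorem S21_eq : S21 =
    (Subgroup.closure {betaSL ^ 2 * rhoSL, betaSL, betaSL ^ 2 * sigmaSL * betaSL}).map embSL := by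
  rw [← gen3_image_emb, Set.image_insert_eq, Set.image_pair, ← alpha_eq, ← gamma_eq]
  rfl

end Complex

theorem stmt9 :
    gen3 {sigma, rho} = S21 ∧ Nonempty (gen3 {sigma, rho} ≃* SL25) := by
  have hrel := sl25Relations_sigmaSL_rhoSL_betaSL
  refine ⟨by rw [gen3_sigma_rho, S21_eq, closure_pair_eq_of_mem hrel.b_mem_closure], ?_⟩
  rw [gen3_sigma_rho]
  exact ⟨(Subgroup.equivMapOfInjective _ embSL embSL_injective).symm.trans
    (hrel.closureEquiv betaSL_sq_ne_one)⟩
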